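/- arXiv:math-ph/0304042 — 2 statements merged into one kernel-verified Lean document; each statement's English description precedes it below -/
import Mathlib

section
/- Define the map T of ℝ⁶ (coordinates A₀,A₁,A₂,F₀,F₁,F₂, indices modulo 3) by T(Aⱼ) = Aⱼ and T(Fⱼ) = Aⱼ + A_{j+1} + F_{j+1} + max(0, A_{j+2}+F_{j+2}, A_{j+2}+Aⱼ+F_{j+2}+Fⱼ) − max(0, Aⱼ+Fⱼ, Aⱼ+A_{j+1}+Fⱼ+F_{j+1}) for j ∈ {0,1,2}. Then T commutes with each of the piecewise linear maps S₀, S₁, S₂ and Π: T∘Sᵢ = Sᵢ∘T and T∘Π = Π∘T; that is, the extended affine Weyl group of type A₂⁽¹⁾ acts on the fourth ultra-discrete Painlevé equation uP_IV as a group of Bäcklund transformations. -/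
/-!
The time evolution T of the fourth ultra-discrete Painlevé equation uP_IV
commutes with the ultra-discretized extended affine Weyl group action of
type A₂⁽¹⁾ on ℝ⁶ (coordinates (A₀,A₁,A₂,F₀,F₁,F₂), realized as pairs of
functions ZMod 3 → ℝ).
-/

noncomputable section

/-- The space ℝ⁶ with coordinates (A₀,A₁,A₂,F₀,F₁,F₂), indices mod 3. -/
abbrev UDSpace := (ZMod 3 → ℝ) × (ZMod 3 → ℝ)

/-- The Cartan matrix of type A₂⁽¹⁾: aᵢᵢ = 2, aᵢⱼ = −1 for i ≠ j. -/
def cartanA2 (i j : ZMod 3) : ℤ := if i = j then 2 else -1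

/-- The orientation matrix of the triangle: uᵢᵢ = 0, u_{i,i+1} = 1, u_{i,i+2} = −1. -/
def orientA2 (i j : ZMod 3) : ℤ := if j = i then 0 else if j = i + 1 then 1 else -1

/-- The ultra-discrete simple reflection Sᵢ:
Sᵢ(Aⱼ) = Aⱼ − Aᵢaᵢⱼ, Sᵢ(Fⱼ) = Fⱼ + uᵢⱼ(max(Aᵢ,Fᵢ) − max(0, Aᵢ+Fᵢ)). -/
def uS (i : ZMod 3) (x : UDSpace) : UDSpace :=
  (fun j => x.1 j - (cartanA2 i j : ℝ) * x.1 i,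
   fun j => x.2 j + (orientA2 i j : ℝ) *
     (max (x.1 i) (x.2 i) - max 0 (x.1 i + x.2 i)))

/-- The ultra-discrete diagram rotation Π: Π(Aⱼ) = A_{j+1}, Π(Fⱼ) = F_{j+1}. -/
def uPi (x : UDSpace) : UDSpace :=
  (fun j => x.1 (j + 1), fun j => x.2 (j + 1))

/-- The time evolution of the fourth ultra-discrete Painlevé equation uP_IV:
T(Aⱼ) = Aⱼ and T(Fⱼ) = Aⱼ + A_{j+1} + F_{j+1}
+ max(0, A_{j+2}+F_{j+2}, A_{j+2}+Aⱼ+F_{j+2}+Fⱼ)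
− max(0, Aⱼ+Fⱼ, Aⱼ+A_{j+1}+Fⱼ+F_{j+1}). -/
def uT (x : UDSpace) : UDSpace :=
  (x.1,
   fun j => x.1 j + x.1 (j + 1) + x.2 (j + 1) +
     max (max 0 (x.1 (j + 2) + x.2 (j + 2)))
         (x.1 (j + 2) + x.1 j + x.2 (j + 2) + x.2 j) -
     max (max 0 (x.1 j + x.2 j))
         (x.1 j + x.1 (j + 1) + x.2 j + x.2 (j + 1)))

/-!
With `yⱼ = Aⱼ + Fⱼ` and `Dⱼ = max(0, yⱼ, yⱼ + y_{j+1})`, the time evolution reads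
`T(Fⱼ) = Aⱼ + y_{j+1} + D_{j+2} - Dⱼ`. Let `δᵢ` be the amount by which `Sᵢ` raises `F_{i+1}` and
lowers `F_{i+2}`. Then `Sᵢ` adds `δᵢ - Aᵢ` to `Dᵢ` and fixes `D_{i+2}`, while
`T(δᵢ) = Aᵢ + D_{i+1} - Sᵢ(D_{i+1})`. Given these rules, every component of `T ∘ Sᵢ = Sᵢ ∘ T` is a
linear identity. The rules are max-plus readings of identities for qP_IV that become free of
subtraction after clearing denominators, so they follow by distributing `+` over `max` and matching
the terms.
-/

section TropicalPoly

/-- The ultra-discretization `max(0, p, p + q)` of the polynomial `1 + p + p q`, whose values at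
consecutive pairs of the variables `aⱼ fⱼ` are the numerators and denominators in the time evolution
of qP_IV. -/
def tropPoly {G : Type*} [AddZeroClass G] [LinearOrder G] (p q : G) : G :=
  max (max 0 p) (p + q)

/-- The amount `max(a, f) - max(0, a + f)` by which the reflection at a node with variables `a`, `f`
raises the next `F`-variable and lowers the previous one. -/
def reflectionShift {G : Type*} [AddGroup G] [LinearOrder G] (a f : G) : G :=
  max a f - max 0 (a + f)

lemma tropPoly_eq_max_zero_add {G : Type*} [AddZeroClass G] [LinearOrder G] [AddLeftMono G]
    (p q : G) :
    tropPoly p q = max 0 (p + max 0 q) := by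
  simp only [tropPoly, add_max, add_zero, max_assoc]

/-- Max-plus form of `(1 + p)(1 + q + q r) = (1 + p + p q) + q (1 + r + r p)`. -/
lemma max_zero_add_tropPoly {G : Type*} [AddCommMonoid G] [LinearOrder G] [IsOrderedAddMonoid G]
    (p q r : G) :
    max 0 p + tropPoly q r = max (tropPoly p q) (q + tropPoly r p) := by
  simp only [tropPoly, add_max, add_zero, add_comm, add_left_comm, max_assoc, max_comm,
    max_left_comm]

variable {G : Type*} [AddCommGroup G] [LinearOrder G] [IsOrderedAddMonoid G]

lemma max_zero_sub (a f : G) : max 0 (f - a) = max a f - a := by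
  rw [← max_sub_sub_right, sub_self]

lemma tropPoly_sub_add_reflectionShift (a f q : G) :
    tropPoly (f - a) (q + a + reflectionShift a f) =
      tropPoly (a + f) q + reflectionShift a f - a := by
  calc tropPoly (f - a) (q + a + reflectionShift a f)
      = max (max 0 (a + f) + (reflectionShift a f - a))
          (a + f + q + (reflectionShift a f - a)) := by
        rw [tropPoly, max_zero_sub, reflectionShift]
        congr 1 <;> abel
    _ = tropPoly (a + f) q + reflectionShift a f - a := by
        rw [max_add_add_right, tropPoly, add_sub_assoc]

lemma tropPoly_sub_reflectionShift_sub (a f r : G) :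
    tropPoly (r + a - reflectionShift a f) (f - a) = tropPoly r (a + f) := by
  rw [tropPoly_eq_max_zero_add, tropPoly_eq_max_zero_add, max_zero_sub, reflectionShift]
  congr 1
  abel

/-- Max-plus form of `(1 + a f)(1 + q' + q' r') = (1 + a f + a f q) + a² q (1 + r + r a f)`, where
`q'` and `r'` are the images of `q` and `r` under the reflection. -/
lemma max_zero_add_tropPoly_reflectionShift (a f q r : G) :
    max 0 (a + f) +
        tropPoly (q + a + reflectionShift a f) (r + a - reflectionShift a f) =
      max (tropPoly (a + f) q) (a + a + q + tropPoly r (a + f)) := by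
  have hshift (z : G) : reflectionShift a f + max 0 (z - reflectionShift a f) =
      max (max a f) (max 0 (a + f) + z) - max 0 (a + f) := by
    rw [← max_add_add_left, ← max_sub_sub_right, reflectionShift]
    congr 1 <;> abel
  calc max 0 (a + f) + tropPoly (q + a + reflectionShift a f) (r + a - reflectionShift a f)
      = max (max 0 (a + f)) (q + a + max (max a f) (max 0 (a + f) + (r + a))) := by
        rw [tropPoly_eq_max_zero_add, add_assoc (q + a), hshift, ← max_add_add_left, add_zero]
        congr 1
        abel
    _ = max (tropPoly (a + f) q) (a + a + q + tropPoly r (a + f)) := by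
        simp only [tropPoly, add_max, add_zero, add_comm, add_left_comm, max_assoc, max_comm,
          max_left_comm]

/-- The second argument on the left is the image of `f` under the time evolution. -/
lemma reflectionShift_evolution (a f q r : G) :
    reflectionShift a (a + q + tropPoly r (a + f) - tropPoly (a + f) q) =
      a + tropPoly q r -
        tropPoly (q + a + reflectionShift a f) (r + a - reflectionShift a f) := by
  set q' := q + a + reflectionShift a f
  set r' := r + a - reflectionShift a f
  set t := a + q + tropPoly r (a + f) - tropPoly (a + f) q
  have hmax : max a t = a + max 0 (a + f) + tropPoly q r - tropPoly (a + f) q := by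
    rw [add_assoc, max_zero_add_tropPoly, ← max_add_add_left, ← max_sub_sub_right]
    congr 1
    · abel
    · simp only [t]
      abel
  have hzero : max 0 (a + t) = max 0 (a + f) + tropPoly q' r' - tropPoly (a + f) q := by
    rw [max_zero_add_tropPoly_reflectionShift, ← max_sub_sub_right]
    congr 1
    · abel
    · simp only [t]
      abel
  rw [reflectionShift, hmax, hzero]
  abel

end TropicalPoly

section Indices

variable (i : ZMod 3)

lemma zmod_three_add_one_add_one : i + 1 + 1 = i + 2 := by ring

lemma zmod_three_add_one_add_two : i + 1 + 2 = i := by decide +revert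

lemma zmod_three_add_two_add_one : i + 2 + 1 = i := by decide +revert

lemma zmod_three_add_two_add_two : i + 2 + 2 = i + 1 := by decide +revert

lemma zmod_three_eq_or_eq_add (j : ZMod 3) : j = i ∨ j = i + 1 ∨ j = i + 2 := by decide +revert

lemma cartanA2_self : cartanA2 i i = 2 := by decide +revert

lemma cartanA2_add_one : cartanA2 i (i + 1) = -1 := by decide +revert

lemma cartanA2_add_two : cartanA2 i (i + 2) = -1 := by decide +revert

lemma orientA2_self : orientA2 i i = 0 := by decide +revert

lemma orientA2_add_one : orientA2 i (i + 1) = 1 := by decide +revert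

lemma orientA2_add_two : orientA2 i (i + 2) = -1 := by decide +revert

end Indices

/-- The combination `yⱼ = Aⱼ + Fⱼ`, the ultra-discretization of `aⱼ fⱼ`. -/
def uY (x : UDSpace) (j : ZMod 3) : ℝ := x.1 j + x.2 j

/-- The tropical polynomial `Dⱼ = max(0, yⱼ, yⱼ + y_{j+1})` occurring in `uT`. -/
def uD (x : UDSpace) (j : ZMod 3) : ℝ := tropPoly (uY x j) (uY x (j + 1))

lemma uD_eq_max (x : UDSpace) (j : ZMod 3) :
    uD x j = max (max 0 (x.1 j + x.2 j)) (x.1 j + x.1 (j + 1) + x.2 j + x.2 (j + 1)) := by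
  rw [uD, uY, uY, tropPoly, add_add_add_comm, ← add_assoc]

/-- The amount `δᵢ` by which `uS i` raises `F_{i+1}` and lowers `F_{i+2}`. -/
def uShift (x : UDSpace) (i : ZMod 3) : ℝ := reflectionShift (x.1 i) (x.2 i)

lemma uT_fst (x : UDSpace) : (uT x).1 = x.1 := rfl

lemma uT_snd (x : UDSpace) (j : ZMod 3) :
    (uT x).2 j = x.1 j + uY x (j + 1) + uD x (j + 2) - uD x j := by
  simp only [uT, uD_eq_max, uY, zmod_three_add_two_add_one]
  ring

lemma uT_snd_add_one (x : UDSpace) (i : ZMod 3) :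
    (uT x).2 (i + 1) = x.1 (i + 1) + uY x (i + 2) + uD x i - uD x (i + 1) := by
  rw [uT_snd, zmod_three_add_one_add_one, zmod_three_add_one_add_two]

lemma uT_snd_add_two (x : UDSpace) (i : ZMod 3) :
    (uT x).2 (i + 2) = x.1 (i + 2) + uY x i + uD x (i + 1) - uD x (i + 2) := by
  rw [uT_snd, zmod_three_add_two_add_one, zmod_three_add_two_add_two]

section Reflection

variable (i : ZMod 3) (x : UDSpace)

lemma uS_fst_self : (uS i x).1 i = -x.1 i := by
  simp only [uS, cartanA2_self]
  push_cast
  ring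

lemma uS_fst_add_one : (uS i x).1 (i + 1) = x.1 (i + 1) + x.1 i := by
  simp only [uS, cartanA2_add_one]
  push_cast
  ring

lemma uS_fst_add_two : (uS i x).1 (i + 2) = x.1 (i + 2) + x.1 i := by
  simp only [uS, cartanA2_add_two]
  push_cast
  ring

lemma uS_snd_self : (uS i x).2 i = x.2 i := by
  simp only [uS, orientA2_self, Int.cast_zero, zero_mul, add_zero]

lemma uS_snd_add_one : (uS i x).2 (i + 1) = x.2 (i + 1) + uShift x i := by
  simp only [uS, orientA2_add_one, Int.cast_one, one_mul, uShift, reflectionShift]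

lemma uS_snd_add_two : (uS i x).2 (i + 2) = x.2 (i + 2) - uShift x i := by
  simp only [uS, orientA2_add_two, uShift, reflectionShift]
  push_cast
  ring

lemma uY_uS_self : uY (uS i x) i = x.2 i - x.1 i := by
  rw [uY, uS_fst_self, uS_snd_self]
  ring

lemma uY_uS_add_one : uY (uS i x) (i + 1) = uY x (i + 1) + x.1 i + uShift x i := by
  rw [uY, uY, uS_fst_add_one, uS_snd_add_one]
  ring

lemma uY_uS_add_two : uY (uS i x) (i + 2) = uY x (i + 2) + x.1 i - uShift x i := by
  rw [uY, uY, uS_fst_add_two, uS_snd_add_two]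
  ring

lemma uD_uS_self : uD (uS i x) i = uD x i + uShift x i - x.1 i := by
  rw [uD, uY_uS_self, uY_uS_add_one]
  exact tropPoly_sub_add_reflectionShift ..

lemma uD_uS_add_two : uD (uS i x) (i + 2) = uD x (i + 2) := by
  rw [uD, uD, zmod_three_add_two_add_one, uY_uS_self, uY_uS_add_two]
  exact tropPoly_sub_reflectionShift_sub ..

lemma uShift_uT : uShift (uT x) i = x.1 i + uD x (i + 1) - uD (uS i x) (i + 1) := by
  rw [uShift, uT_fst, uT_snd]
  simp only [uD, zmod_three_add_one_add_one, zmod_three_add_two_add_one, uY_uS_add_one,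
    uY_uS_add_two]
  exact reflectionShift_evolution ..

lemma uT_uS : uT (uS i x) = uS i (uT x) := by
  refine Prod.ext rfl (funext fun j => ?_)
  rcases zmod_three_eq_or_eq_add i j with rfl | rfl | rfl
  · rw [uS_snd_self, uT_snd, uT_snd, uS_fst_self, uY_uS_add_one, uD_uS_self, uD_uS_add_two]
    ring
  · rw [uS_snd_add_one, uShift_uT, uT_snd_add_one, uT_snd_add_one, uS_fst_add_one, uY_uS_add_two,
      uD_uS_self]
    ring
  · rw [uS_snd_add_two, uShift_uT, uT_snd_add_two, uT_snd_add_two, uS_fst_add_two, uY_uS_self,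
      uD_uS_add_two, uY]
    ring

end Reflection

lemma uT_uPi (x : UDSpace) : uT (uPi x) = uPi (uT x) := by
  simp only [uT, uPi, add_right_comm _ (2 : ZMod 3) 1]

/-- the time evolution T of uP_IV commutes with each of the
piecewise linear maps S₀, S₁, S₂, Π; i.e. the extended affine Weyl group of
type A₂⁽¹⁾ acts on uP_IV as a group of Bäcklund transformations. -/
theorem uPIV_time_evolution_commutes_with_Weyl_action :
    (∀ i : ZMod 3, uT ∘ uS i = uS i ∘ uT) ∧ uT ∘ uPi = uPi ∘ uT :=
  ⟨fun i => funext (uT_uS i), funext uT_uPi⟩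

end
end

section
/- Let F = ℂ(q, p, t, α₁) be the field of rational functions in four variables and set α₀ := 1 − α₁. Let δ be the unique ℂ-derivation of F with δ(t) = 1, δ(α₁) = 0, δ(q) = p − q² + t/2 and δ(p) = 2qp − α₁ (the Hamiltonian vector field of H = (1/2)p(p−2q²+t) + α₁q for the second Painlevé equation, δ(q) = ∂H/∂p, δ(p) = −∂H/∂q). Define s₁, π : F → F by s₁: (q, p, t, α₁) ↦ (q − α₁/p, p, t, −α₁) and π: (q, p, t, α₁) ↦ (−q, −p + 2q² − t, t, 1 − α₁), and set s₀ := π s₁ π. Then: (1) s₁ and π are field automorphisms of F with s₁² = id and π² = id, hence s₀ is an automorphism with s₀² = id; (2) s₁ and π (hence also s₀) commute with the derivation δ, i.e. they are Bäcklund transformations of the second Painlevé equation; (3) s₁ and π preserve the Poisson bracket {φ,ψ} = (∂φ/∂p)(∂ψ/∂q) − (∂φ/∂q)(∂ψ/∂p) (partial derivatives taken with t, α₁ as constants), i.e. they are canonical transformations; and (4) the product s₀s₁ has infinite order, so the subgroup ⟨s₀, s₁⟩ of Aut(F) is isomorphic to the affine Weyl group W(A₁⁽¹⁾), the infinite dihedral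 group. -/
/-!
Bäcklund transformations of the second Painlevé equation.  The field
F = ℂ(q,p,t,α₁) is realized as the fraction field of `MvPolynomial (Fin 4) ℂ`
with q = X 0, p = X 1, t = X 2, α₁ = X 3.  The Hamiltonian vector field of
H = (1/2)p(p−2q²+t) + α₁q is the derivation δ with δ(q) = p − q² + t/2,
δ(p) = 2qp − α₁, δ(t) = 1, δ(α₁) = 0.  The Poisson bracket is expressed via
the partial-derivative derivations ∂/∂q and ∂/∂p (characterized by their
values on the four generators).
-/

open MvPolynomial

noncomputable section

abbrev PolyP2 := MvPolynomial (Fin 4) ℂ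

abbrev FP2 := FractionRing PolyP2

def qF : FP2 := algebraMap PolyP2 FP2 (X 0)
def pF : FP2 := algebraMap PolyP2 FP2 (X 1)
def tF : FP2 := algebraMap PolyP2 FP2 (X 2)
def αF : FP2 := algebraMap PolyP2 FP2 (X 3)

/-!
An identity between derivations and automorphisms of a field only has to be checked on generators.
So involutivity and commutation with `δ` are finite computations, and, the bracket being a
derivation in each argument, an automorphism `σ` that keeps the coordinates `t`, `α` central is
canonical as soon as `{σ p, σ q} = 1`.

The product `s₀ s₁` translates `α` by `-2`, so it has infinite order in characteristic zero. Two
elements `a`, `b` of order two always generate a dihedral group with rotation `a * b`. The point is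
that `b` is not a power of `a * b`: it would then commute with `a`, so that `(a * b) ^ 2 = 1` and
`b` would be `1` or `a * b`.
-/

section DihedralGroup

variable {G : Type*} [Group G] {n : ℕ} {x y a b : G}

lemma zpow_cast_intCast_zmod (hx : x ^ n = 1) (k : ℤ) :
    x ^ ((k : ZMod n).cast : ℤ) = x ^ k := by
  rw [zpow_eq_zpow_iff_modEq]
  refine Int.ModEq.of_dvd (Int.natCast_dvd_natCast.mpr (orderOf_dvd_of_pow_eq_one hx)) ?_
  rw [← ZMod.intCast_eq_intCast_iff, ZMod.intCast_cast, ZMod.cast_intCast']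

lemma zpow_mul_eq_mul_zpow_neg (hy : y * y = 1) (hyx : y * x * y = x⁻¹) (k : ℤ) :
    x ^ k * y = y * x ^ (-k) := by
  have hyi : y⁻¹ = y := inv_eq_of_mul_eq_one_left hy
  have hconj : y * x ^ k * y⁻¹ = x ^ (-k) := by
    rw [← conj_zpow, hyi, hyx, inv_zpow']
  rw [← hconj, hyi, ← mul_assoc, ← mul_assoc, hy, one_mul]

/-- The homomorphism out of the dihedral group given by its presentation: the rotation `r 1` goes
to `x` and the reflection `sr 0` goes to `y`. -/
def dihedralLift (hx : x ^ n = 1) (hy : y * y = 1) (hyx : y * x * y = x⁻¹) :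
    DihedralGroup n →* G :=
  MonoidHom.mk' (fun
    | .r i => x ^ (i.cast : ℤ)
    | .sr i => y * x ^ (i.cast : ℤ)) <| by
    have hcomm := zpow_mul_eq_mul_zpow_neg hy hyx
    rintro (i | i) (j | j) <;>
    obtain ⟨i, rfl⟩ := ZMod.intCast_surjective i <;>
    obtain ⟨j, rfl⟩ := ZMod.intCast_surjective j <;>
    simp only [DihedralGroup.r_mul_r, DihedralGroup.r_mul_sr, DihedralGroup.sr_mul_r,
      DihedralGroup.sr_mul_sr, ← Int.cast_add, ← Int.cast_sub, zpow_cast_intCast_zmod hx]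
    · exact zpow_add x i j
    · rw [← mul_assoc, hcomm, mul_assoc, ← zpow_add, sub_eq_neg_add]
    · rw [mul_assoc, zpow_add]
    · rw [mul_assoc, ← mul_assoc (x ^ i), hcomm, mul_assoc y, ← mul_assoc y y, hy, one_mul,
        ← zpow_add, sub_eq_neg_add]

lemma dihedralLift_r_intCast (hx : x ^ n = 1) (hy : y * y = 1) (hyx : y * x * y = x⁻¹) (k : ℤ) :
    dihedralLift hx hy hyx (.r k) = x ^ k :=
  zpow_cast_intCast_zmod hx k

lemma dihedralLift_sr_intCast (hx : x ^ n = 1) (hy : y * y = 1) (hyx : y * x * y = x⁻¹) (k : ℤ) :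
    dihedralLift hx hy hyx (.sr k) = y * x ^ k :=
  congrArg (y * ·) (zpow_cast_intCast_zmod hx k)

lemma range_dihedralLift (hx : x ^ n = 1) (hy : y * y = 1) (hyx : y * x * y = x⁻¹) :
    (dihedralLift hx hy hyx).range = Subgroup.closure {x, y} := by
  have hxmem : x ∈ Subgroup.closure {x, y} := Subgroup.subset_closure (by simp)
  have hymem : y ∈ Subgroup.closure {x, y} := Subgroup.subset_closure (by simp)
  apply le_antisymm
  · rintro _ ⟨i | i, rfl⟩
    · exact zpow_mem hxmem _
    · exact mul_mem hymem (zpow_mem hxmem _)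
  · rw [Subgroup.closure_le, Set.pair_subset_iff]
    exact ⟨⟨.r (1 : ℤ), by rw [dihedralLift_r_intCast, zpow_one]⟩,
      ⟨.sr (0 : ℤ), by rw [dihedralLift_sr_intCast, zpow_zero, mul_one]⟩⟩

lemma dihedralLift_injective (hy : y * y = 1) (hyx : y * x * y = x⁻¹)
    (hmem : y ∉ Subgroup.zpowers x) :
    Function.Injective (dihedralLift (pow_orderOf_eq_one x) hy hyx) := by
  rw [injective_iff_map_eq_one]
  rintro (i | i) h <;> obtain ⟨k, rfl⟩ := ZMod.intCast_surjective i
  · rw [dihedralLift_r_intCast, ← orderOf_dvd_iff_zpow_eq_one] at h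
    rw [(ZMod.intCast_zmod_eq_zero_iff_dvd k _).mpr h, DihedralGroup.r_zero]
  · rw [dihedralLift_sr_intCast, mul_eq_one_iff_eq_inv, ← zpow_neg] at h
    exact absurd ⟨-k, h.symm⟩ hmem

lemma notMem_zpowers_mul_of_orderOf_eq_two (ha : orderOf a = 2) (hb : orderOf b = 2) :
    b ∉ Subgroup.zpowers (a * b) := by
  rintro ⟨k, hk : (a * b) ^ k = b⟩
  have hab : Commute a b := by
    have h : Commute (a * b) b := by
      simpa only [hk] using Commute.self_zpow (a * b) k
    exact mul_right_cancel (b := b) (h.eq.trans (mul_assoc _ _ _).symm)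
  have hsq : (a * b) ^ (2 : ℤ) = 1 := by
    rw [zpow_ofNat, hab.mul_pow, ← ha, pow_orderOf_eq_one, one_mul, ha, ← hb, pow_orderOf_eq_one]
  obtain ⟨m, rfl | rfl⟩ := k.even_or_odd'
  · rw [zpow_mul, hsq, one_zpow] at hk
    simp [← hk] at hb
  · rw [zpow_add, zpow_mul, hsq, one_zpow, one_mul, zpow_one, mul_eq_right] at hk
    simp [hk] at ha

lemma closure_pair_mul_left : Subgroup.closure {a * b, b} = Subgroup.closure {a, b} := by
  have hab : a * b ∈ Subgroup.closure {a * b, b} := Subgroup.mem_closure_of_mem (by simp)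
  have hb : b ∈ Subgroup.closure {a * b, b} := Subgroup.mem_closure_of_mem (by simp)
  have ha' : a ∈ Subgroup.closure {a, b} := Subgroup.mem_closure_of_mem (by simp)
  have hb' : b ∈ Subgroup.closure {a, b} := Subgroup.mem_closure_of_mem (by simp)
  apply le_antisymm <;> rw [Subgroup.closure_le, Set.pair_subset_iff]
  · exact ⟨mul_mem ha' hb', hb'⟩
  · exact ⟨by simpa using mul_mem hab (inv_mem hb), hb⟩

theorem nonempty_closure_pair_mulEquiv_dihedralGroup (ha : orderOf a = 2) (hb : orderOf b = 2) :
    Nonempty (Subgroup.closure {a, b} ≃* DihedralGroup (orderOf (a * b))) := by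
  have haa : a * a = 1 := by rw [← sq, ← ha, pow_orderOf_eq_one]
  have hbb : b * b = 1 := by rw [← sq, ← hb, pow_orderOf_eq_one]
  have hconj : b * (a * b) * b = (a * b)⁻¹ := by
    rw [mul_inv_rev, inv_eq_of_mul_eq_one_left haa, inv_eq_of_mul_eq_one_left hbb, mul_assoc,
      mul_assoc, hbb, mul_one]
  have hinj := dihedralLift_injective hbb hconj (notMem_zpowers_mul_of_orderOf_eq_two ha hb)
  have hrange := (range_dihedralLift (pow_orderOf_eq_one _) hbb hconj).trans closure_pair_mul_left
  exact ⟨((MonoidHom.ofInjective hinj).trans (MulEquiv.subgroupCongr hrange)).symm⟩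

theorem nonempty_closure_pair_mulEquiv_dihedralGroup_zero (ha : a * a = 1) (hb : b * b = 1)
    (hab : ¬IsOfFinOrder (a * b)) :
    Nonempty (Subgroup.closure {a, b} ≃* DihedralGroup 0) := by
  have ha1 : a ≠ 1 := by
    rintro rfl
    exact hab (isOfFinOrder_iff_pow_eq_one.mpr ⟨2, two_pos, by rw [one_mul, sq, hb]⟩)
  have hb1 : b ≠ 1 := by
    rintro rfl
    exact hab (isOfFinOrder_iff_pow_eq_one.mpr ⟨2, two_pos, by rw [mul_one, sq, ha]⟩)
  rw [← orderOf_eq_zero hab]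
  exact nonempty_closure_pair_mulEquiv_dihedralGroup
    (orderOf_eq_prime (sq a ▸ ha) ha1) (orderOf_eq_prime (sq b ▸ hb) hb1)

end DihedralGroup

lemma not_isOfFinOrder_of_smul_eq_add {M A : Type*} [Monoid M] [AddLeftCancelMonoid A]
    [DistribMulAction M A] {g : M} {x c : A} (hx : g • x = x + c) (hc : g • c = c)
    (hc_order : ¬IsOfFinAddOrder c) : ¬IsOfFinOrder g := by
  have hpow (n : ℕ) : g ^ n • x = x + n • c := by
    induction n with
    | zero => simp
    | succ n ih =>
      rw [pow_succ', mul_smul, ih, smul_add, hx, smul_comm, hc, succ_nsmul', add_assoc]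
  intro hg
  obtain ⟨n, hn, h⟩ := isOfFinOrder_iff_pow_eq_one.mp hg
  have hnc : n • c = 0 := by simpa [h] using (hpow n).symm
  exact hc_order (isOfFinAddOrder_iff_nsmul_eq_zero.mpr ⟨n, hn, hnc⟩)

section Generators

variable {K F : Type*} [Field K] [Field F] [Algebra K F] {S : Set F}

lemma algHom_derivation_comm_of_adjoin_eq_top {L Φ : Type*} [Field L] [Algebra K L]
    [FunLike Φ F L] [AlgHomClass Φ K F L] (hS : IntermediateField.adjoin K S = ⊤) (σ : Φ)
    (D : Derivation K F F) (E : Derivation K L L) (h : ∀ x ∈ S, σ (D x) = E (σ x)) (x : F) :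
    σ (D x) = E (σ x) := by
  have hx : x ∈ IntermediateField.adjoin K S := hS ▸ IntermediateField.mem_top
  induction hx using IntermediateField.adjoin_induction with
  | mem x hx => exact h x hx
  | algebraMap c => rw [D.map_algebraMap, map_zero, AlgHomClass.commutes, E.map_algebraMap]
  | add x y _ _ ihx ihy => simp [ihx, ihy]
  | inv x _ ih => simp [Derivation.leibniz_inv, ih]
  | mul x y _ _ ihx ihy => simp [ihx, ihy]

lemma algHom_ext_of_adjoin_eq_top {L : Type*} [Field L] [Algebra K L]
    (hS : IntermediateField.adjoin K S = ⊤) {σ τ : F →ₐ[K] L} (h : ∀ x ∈ S, σ x = τ x) :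
    σ = τ := by
  have hcomp :
      σ.comp (IntermediateField.adjoin K S).val = τ.comp (IntermediateField.adjoin K S).val :=
    IntermediateField.adjoin_algHom_ext K h
  exact AlgHom.ext fun x ↦ DFunLike.congr_fun hcomp ⟨x, hS ▸ IntermediateField.mem_top⟩

lemma algEquiv_mul_self_eq_one_of_adjoin_eq_top (hS : IntermediateField.adjoin K S = ⊤)
    {σ : F ≃ₐ[K] F} (h : ∀ x ∈ S, σ (σ x) = x) : σ * σ = 1 :=
  AlgEquiv.coe_toAlgHom_injective (algHom_ext_of_adjoin_eq_top hS h)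

lemma adjoin_range_algebraMap_X_eq_top (ι K L : Type*) [Field K] [Field L] [Algebra K L]
    [Algebra (MvPolynomial ι K) L] [IsScalarTower K (MvPolynomial ι K) L]
    [IsFractionRing (MvPolynomial ι K) L] :
    IntermediateField.adjoin K (Set.range fun i : ι ↦ algebraMap (MvPolynomial ι K) L (X i)) =
      ⊤ := by
  let f : MvPolynomial ι K →ₐ[K] L := IsScalarTower.toAlgHom K (MvPolynomial ι K) L
  have hrange : f.range = Algebra.adjoin K (Set.range fun i ↦ f (X i)) := by
    rw [Set.range_comp' f X, ← AlgHom.map_adjoin, MvPolynomial.adjoin_range_X, Algebra.map_top]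
  rw [← (AlgHom.fieldRange_eq_top (f := AlgHom.id K L)).mpr Function.surjective_id]
  exact (IsFractionRing.algHom_fieldRange_eq_of_comp_eq_of_range_eq (f := AlgHom.id K L) (g := f)
    rfl hrange).symm

end Generators

section PoissonBracket

variable {R A : Type*} [CommRing R] [CommRing A] [Algebra R A] {q p : A} {C : Set A}
  {dq dp : Derivation R A A}

/-- The Poisson bracket `{φ, ψ} = φ_p ψ_q - φ_q ψ_p` attached to two derivations, `dq` standing for
`∂/∂q` and `dp` for `∂/∂p`; it is bundled as a derivation in its second argument. -/
def poissonBracket (dq dp : Derivation R A A) (φ : A) : Derivation R A A :=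
  dp φ • dq - dq φ • dp

lemma poissonBracket_apply (dq dp : Derivation R A A) (φ ψ : A) :
    poissonBracket dq dp φ ψ = dp φ * dq ψ - dq φ * dp ψ :=
  rfl

lemma poissonBracket_swap (dq dp : Derivation R A A) (φ ψ : A) :
    poissonBracket dq dp φ ψ = -poissonBracket dq dp ψ φ := by
  simp only [poissonBracket_apply]
  ring

/-- `dq` and `dp` are the partial derivatives `∂/∂q` and `∂/∂p` with respect to a system of
coordinates formed by `q`, `p` and the parameters in `C`. -/
structure IsPartialDerivs (q p : A) (C : Set A) (dq dp : Derivation R A A) : Prop where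
  dq_q : dq q = 1
  dq_p : dq p = 0
  dq_param : ∀ c ∈ C, dq c = 0
  dp_q : dp q = 0
  dp_p : dp p = 1
  dp_param : ∀ c ∈ C, dp c = 0

lemma IsPartialDerivs.p_ne_zero [Nontrivial A] (h : IsPartialDerivs q p C dq dp) : p ≠ 0 := by
  rintro rfl
  simpa using h.dp_p

end PoissonBracket

section Canonical

variable {K F Φ : Type*} [Field K] [Field F] [Algebra K F] [FunLike Φ F F] [AlgHomClass Φ K F F]
  {q p : F} {C S : Set F} {dq dp : Derivation K F F}

lemma map_poissonBracket_of_adjoin_eq_top (hS : IntermediateField.adjoin K S = ⊤) (σ : Φ)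
    (h : ∀ x ∈ S, ∀ y ∈ S,
      σ (poissonBracket dq dp x y) = poissonBracket dq dp (σ x) (σ y)) (φ ψ : F) :
    σ (poissonBracket dq dp φ ψ) = poissonBracket dq dp (σ φ) (σ ψ) := by
  refine algHom_derivation_comm_of_adjoin_eq_top hS σ _ _ (fun y hy ↦ ?_) ψ
  rw [poissonBracket_swap, poissonBracket_swap dq dp (σ φ), map_neg,
    algHom_derivation_comm_of_adjoin_eq_top hS σ _ _ (h y hy) φ]

theorem IsPartialDerivs.map_poissonBracket (h : IsPartialDerivs q p C dq dp)
    (hgen : IntermediateField.adjoin K (insert q (insert p C)) = ⊤) (σ : Φ)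
    (hdq : ∀ c ∈ C, dq (σ c) = 0) (hdp : ∀ c ∈ C, dp (σ c) = 0)
    (hpq : poissonBracket dq dp (σ p) (σ q) = 1) (φ ψ : F) :
    σ (poissonBracket dq dp φ ψ) = poissonBracket dq dp (σ φ) (σ ψ) := by
  have hqp : poissonBracket dq dp (σ q) (σ p) = -1 := by rw [poissonBracket_swap, hpq]
  refine map_poissonBracket_of_adjoin_eq_top hgen σ ?_ φ ψ
  rintro x (rfl | rfl | hx) y (rfl | rfl | hy) <;>
    simp_all [poissonBracket_apply, h.dq_q, h.dq_p, h.dq_param, h.dp_q, h.dp_p, h.dp_param,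
      mul_comm]

end Canonical

namespace PainleveII

variable {K F : Type*} [Field K] [Field F] [Algebra K F] {q p t α : F}

/-- `δ` is the Hamiltonian vector field of `H = (1/2) p (p - 2q² + t) + α q`, whose flow is the
second Painlevé equation. -/
structure IsHamiltonianField (q p t α : F) (δ : Derivation K F F) : Prop where
  apply_q : δ q = p - q ^ 2 + t / 2
  apply_p : δ p = 2 * q * p - α
  apply_t : δ t = 1
  apply_α : δ α = 0

/-- `s` acts on the coordinates as the Bäcklund transformation `s₁`. -/
structure IsReflection (q p t α : F) (s : F ≃ₐ[K] F) : Prop where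
  map_q : s q = q - α / p
  map_p : s p = p
  map_t : s t = t
  map_α : s α = -α

/-- `π` acts on the coordinates as the Bäcklund transformation `π`, which interchanges the
parameters `α₀ = 1 - α` and `α₁ = α`. -/
structure IsDiagramAutomorphism (q p t α : F) (π : F ≃ₐ[K] F) : Prop where
  map_q : π q = -q
  map_p : π p = -p + 2 * q ^ 2 - t
  map_t : π t = t
  map_α : π α = 1 - α

section Reflection

variable {s : F ≃ₐ[K] F}

lemma IsReflection.mul_self (hs : IsReflection q p t α s)
    (hgen : IntermediateField.adjoin K {q, p, t, α} = ⊤) : s * s = 1 := by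
  apply algEquiv_mul_self_eq_one_of_adjoin_eq_top hgen
  rintro x (rfl | rfl | rfl | rfl) <;>
    simp [hs.map_q, hs.map_p, hs.map_t, hs.map_α, neg_div]

lemma IsReflection.map_hamiltonianField (hs : IsReflection q p t α s)
    (hgen : IntermediateField.adjoin K {q, p, t, α} = ⊤) (hp : p ≠ 0) {δ : Derivation K F F}
    (hδ : IsHamiltonianField q p t α δ) (x : F) : s (δ x) = δ (s x) := by
  refine algHom_derivation_comm_of_adjoin_eq_top hgen s δ δ ?_ x
  have hδq : s (δ q) = δ (s q) := by
    simp only [hs.map_q, hs.map_p, hs.map_t, hδ.apply_q, hδ.apply_p, hδ.apply_α, map_add, map_sub,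
      map_pow, map_div₀, map_ofNat, Derivation.leibniz_div, smul_eq_mul]
    field_simp
    ring
  have hδp : s (δ p) = δ (s p) := by
    simp only [hs.map_q, hs.map_p, hs.map_α, hδ.apply_p, map_sub, map_mul, map_ofNat]
    field_simp
    ring
  rintro x (rfl | rfl | rfl | rfl)
  · exact hδq
  · exact hδp
  · simp [hs.map_t, hδ.apply_t]
  · simp [hs.map_α, hδ.apply_α]

lemma IsReflection.map_poissonBracket (hs : IsReflection q p t α s)
    (hgen : IntermediateField.adjoin K {q, p, t, α} = ⊤) {dq dp : Derivation K F F}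
    (hd : IsPartialDerivs q p {t, α} dq dp) (φ ψ : F) :
    s (poissonBracket dq dp φ ψ) = poissonBracket dq dp (s φ) (s ψ) := by
  have hdq : dq t = 0 ∧ dq α = 0 := by simpa using hd.dq_param
  have hdp : dp t = 0 ∧ dp α = 0 := by simpa using hd.dp_param
  refine hd.map_poissonBracket hgen s ?_ ?_ ?_ φ ψ
  · simp [hs.map_t, hs.map_α, hdq]
  · simp [hs.map_t, hs.map_α, hdp]
  · simp [poissonBracket_apply, hs.map_q, hs.map_p, hdq, hd.dq_q, hd.dq_p, hd.dp_p,
      Derivation.leibniz_div]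

end Reflection

section DiagramAutomorphism

variable {π : F ≃ₐ[K] F}

lemma IsDiagramAutomorphism.mul_self (hπ : IsDiagramAutomorphism q p t α π)
    (hgen : IntermediateField.adjoin K {q, p, t, α} = ⊤) : π * π = 1 := by
  apply algEquiv_mul_self_eq_one_of_adjoin_eq_top hgen
  have hp : π (π p) = p := by
    simp only [hπ.map_q, hπ.map_p, hπ.map_t, map_add, map_sub, map_neg, map_mul, map_pow, map_ofNat]
    ring
  rintro x (rfl | rfl | rfl | rfl)
  · simp [hπ.map_q]
  · exact hp
  · simp [hπ.map_t]
  · simp [hπ.map_α]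

lemma IsDiagramAutomorphism.map_hamiltonianField [NeZero (2 : F)]
    (hπ : IsDiagramAutomorphism q p t α π) (hgen : IntermediateField.adjoin K {q, p, t, α} = ⊤)
    {δ : Derivation K F F} (hδ : IsHamiltonianField q p t α δ) (x : F) : π (δ x) = δ (π x) := by
  refine algHom_derivation_comm_of_adjoin_eq_top hgen π δ δ ?_ x
  have hδ2 : δ 2 = 0 := δ.map_natCast 2
  have hδq : π (δ q) = δ (π q) := by
    simp only [hπ.map_q, hπ.map_p, hπ.map_t, hδ.apply_q, map_add, map_sub, map_neg, map_pow,
      map_div₀, map_ofNat]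
    field_simp
    ring
  have hδp : π (δ p) = δ (π p) := by
    simp only [hπ.map_q, hπ.map_p, hπ.map_α, hδ.apply_q, hδ.apply_p, hδ.apply_t, map_add, map_sub,
      map_neg, map_mul, map_ofNat, Derivation.leibniz, Derivation.leibniz_pow, hδ2, smul_eq_mul,
      nsmul_eq_mul]
    field_simp
    ring
  rintro x (rfl | rfl | rfl | rfl)
  · exact hδq
  · exact hδp
  · simp [hπ.map_t, hδ.apply_t]
  · simp [hπ.map_α, hδ.apply_α]

lemma IsDiagramAutomorphism.map_poissonBracket (hπ : IsDiagramAutomorphism q p t α π)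
    (hgen : IntermediateField.adjoin K {q, p, t, α} = ⊤) {dq dp : Derivation K F F}
    (hd : IsPartialDerivs q p {t, α} dq dp) (φ ψ : F) :
    π (poissonBracket dq dp φ ψ) = poissonBracket dq dp (π φ) (π ψ) := by
  have hdq : dq t = 0 ∧ dq α = 0 := by simpa using hd.dq_param
  have hdp : dp t = 0 ∧ dp α = 0 := by simpa using hd.dp_param
  have hdp2 : dp 2 = 0 := dp.map_natCast 2
  refine hd.map_poissonBracket hgen π ?_ ?_ ?_ φ ψ
  · simp [hπ.map_t, hπ.map_α, hdq]
  · simp [hπ.map_t, hπ.map_α, hdp]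
  · simp [poissonBracket_apply, hπ.map_q, hπ.map_p, hdp, hd.dq_q, hd.dp_q, hd.dp_p,
      Derivation.leibniz_pow, hdp2]

end DiagramAutomorphism

lemma IsReflection.not_isOfFinOrder_conj_mul [CharZero F] {s π : F ≃ₐ[K] F}
    (hs : IsReflection q p t α s) (hπ : IsDiagramAutomorphism q p t α π) :
    ¬IsOfFinOrder (π * s * π * s) := by
  have htranslate : (π * s * π * s) α = α + -2 := by
    simp only [AlgEquiv.mul_apply, hs.map_α, hπ.map_α, map_neg, map_sub, map_one]
    ring
  refine not_isOfFinOrder_of_smul_eq_add (x := α) (c := (-2 : F)) htranslate ?_ ?_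
  · rw [AlgEquiv.smul_def, map_neg, map_ofNat]
  · exact not_isOfFinAddOrder_of_isAddTorsionFree (neg_ne_zero.mpr two_ne_zero)

end PainleveII

theorem backlund_PII_infinite_dihedral_general {K F : Type*} [Field K] [Field F] [Algebra K F]
    [CharZero F] {q p t α : F} (hgen : IntermediateField.adjoin K {q, p, t, α} = ⊤)
    {δ : Derivation K F F} (hδ : PainleveII.IsHamiltonianField q p t α δ)
    {dq dp : Derivation K F F} (hd : IsPartialDerivs q p {t, α} dq dp)
    {s1 π : F ≃ₐ[K] F} (hs1 : PainleveII.IsReflection q p t α s1)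
    (hπ : PainleveII.IsDiagramAutomorphism q p t α π) :
    let s0 : F ≃ₐ[K] F := π * s1 * π
    let pb : F → F → F := fun φ ψ => dp φ * dq ψ - dq φ * dp ψ
    (s1 * s1 = 1 ∧ π * π = 1 ∧ s0 * s0 = 1) ∧
    (∀ x : F, s1 (δ x) = δ (s1 x)) ∧
    (∀ x : F, π (δ x) = δ (π x)) ∧
    (∀ x : F, s0 (δ x) = δ (s0 x)) ∧
    (∀ φ ψ : F, s1 (pb φ ψ) = pb (s1 φ) (s1 ψ)) ∧
    (∀ φ ψ : F, π (pb φ ψ) = pb (π φ) (π ψ)) ∧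
    ¬IsOfFinOrder (s0 * s1) ∧
    Nonempty (Subgroup.closure {s0, s1} ≃* DihedralGroup 0) := by
  intro s0 pb
  have hs1_sq : s1 * s1 = 1 := hs1.mul_self hgen
  have hπ_sq : π * π = 1 := hπ.mul_self hgen
  have hs0_sq : s0 * s0 = 1 := by
    simp only [s0, mul_assoc]
    rw [← mul_assoc π π, hπ_sq, one_mul, ← mul_assoc s1 s1, hs1_sq, one_mul, hπ_sq]
  have hs1_δ := hs1.map_hamiltonianField hgen hd.p_ne_zero hδ
  have hπ_δ := hπ.map_hamiltonianField hgen hδ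
  have hs0_δ (x : F) : s0 (δ x) = δ (s0 x) := by simp only [s0, AlgEquiv.mul_apply, hπ_δ, hs1_δ]
  have h_order : ¬IsOfFinOrder (s0 * s1) := hs1.not_isOfFinOrder_conj_mul hπ
  exact ⟨⟨hs1_sq, hπ_sq, hs0_sq⟩, hs1_δ, hπ_δ, hs0_δ, hs1.map_poissonBracket hgen hd,
    hπ.map_poissonBracket hgen hd, h_order,
    nonempty_closure_pair_mulEquiv_dihedralGroup_zero hs0_sq hs1_sq h_order⟩

lemma adjoin_qF_pF_tF_αF_eq_top :
    IntermediateField.adjoin ℂ {qF, pF, tF, αF} = (⊤ : IntermediateField ℂ FP2) := by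
  rw [← adjoin_range_algebraMap_X_eq_top (Fin 4) ℂ FP2]
  congr 1
  ext x
  simp [Fin.exists_fin_succ, qF, pF, tF, αF, eq_comm]

/-- for the second Painlevé equation with Hamiltonian
H = (1/2)p(p−2q²+t) + α₁q, the transformations
s₁ : (q,p,t,α₁) ↦ (q − α₁/p, p, t, −α₁) and
π : (q,p,t,α₁) ↦ (−q, −p+2q²−t, t, 1−α₁), with s₀ := πs₁π, satisfy:
(1) s₁² = π² = s₀² = 1; (2) s₁, π (hence s₀) commute with the Hamiltonian
vector field δ, i.e. they are Bäcklund transformations; (3) s₁ and π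
preserve the Poisson bracket {φ,ψ} = φ_p ψ_q − φ_q ψ_p, i.e. they are
canonical; (4) s₀s₁ has infinite order, and ⟨s₀,s₁⟩ ≅ W(A₁⁽¹⁾), the
infinite dihedral group. -/
theorem backlund_PII_infinite_dihedral
    (δ : Derivation ℂ FP2 FP2)
    (hδq : δ qF = pF - qF ^ 2 + tF / 2)
    (hδp : δ pF = 2 * qF * pF - αF)
    (hδt : δ tF = 1) (hδα : δ αF = 0)
    (dq dp : Derivation ℂ FP2 FP2)
    (hdq : dq qF = 1 ∧ dq pF = 0 ∧ dq tF = 0 ∧ dq αF = 0)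
    (hdp : dp qF = 0 ∧ dp pF = 1 ∧ dp tF = 0 ∧ dp αF = 0)
    (s1 π : FP2 ≃ₐ[ℂ] FP2)
    (hs1 : s1 qF = qF - αF / pF ∧ s1 pF = pF ∧ s1 tF = tF ∧ s1 αF = -αF)
    (hπ : π qF = -qF ∧ π pF = -pF + 2 * qF ^ 2 - tF ∧ π tF = tF ∧
      π αF = 1 - αF) :
    let s0 : FP2 ≃ₐ[ℂ] FP2 := π * s1 * π
    let pb : FP2 → FP2 → FP2 := fun φ ψ => dp φ * dq ψ - dq φ * dp ψ
    -- (1) involutivity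
    (s1 * s1 = 1 ∧ π * π = 1 ∧ s0 * s0 = 1) ∧
    -- (2) Bäcklund property: commutation with the flow δ
    (∀ x : FP2, s1 (δ x) = δ (s1 x)) ∧
    (∀ x : FP2, π (δ x) = δ (π x)) ∧
    (∀ x : FP2, s0 (δ x) = δ (s0 x)) ∧
    -- (3) canonicity: preservation of the Poisson bracket
    (∀ φ ψ : FP2, s1 (pb φ ψ) = pb (s1 φ) (s1 ψ)) ∧
    (∀ φ ψ : FP2, π (pb φ ψ) = pb (π φ) (π ψ)) ∧
    -- (4) ⟨s₀,s₁⟩ is the affine Weyl group W(A₁⁽¹⁾): infinite dihedral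
    ¬ IsOfFinOrder (s0 * s1) ∧
    Nonempty (↥(Subgroup.closure {s0, s1}) ≃* DihedralGroup 0) := by
  exact backlund_PII_infinite_dihedral_general adjoin_qF_pF_tF_αF_eq_top ⟨hδq, hδp, hδt, hδα⟩
    ⟨hdq.1, hdq.2.1, by simp [hdq], hdp.1, hdp.2.1, by simp [hdp]⟩
    ⟨hs1.1, hs1.2.1, hs1.2.2.1, hs1.2.2.2⟩ ⟨hπ.1, hπ.2.1, hπ.2.2.1, hπ.2.2.2⟩

end
end
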